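/- Let A be an m-accretive operator on a Banach space X (accretive with Range(Id + λA) = X for some, hence all, λ > 0). If u, v : [0,T] → X are two integral solutions of u' + Au ∋ h with respective initial data u₀, v₀, i.e., u(0)=u₀, v(0)=v₀, u,v ∈ C([0,T];X), and for all (û, ẑ) ∈ A and 0 ≤ s ≤ t ≤ T, ‖u(t)-û‖ - ‖u(s)-û‖ ≤ ∫_s^t [u(τ)-û, h(τ)-ẑ] dτ (and similarly for v), then ‖u(t) - v(t)‖ ≤ ‖u₀ - v₀‖ for all t ∈ [0,T]. -/

import Mathlib

open Filter Topology MeasureTheory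

/-- The bracket `[a, b] = lim_{λ↓0} (‖a + λb‖ - ‖a‖)/λ` on a normed space, realized as the
infimum of the (monotone) difference quotients over `λ > 0`. (For `a = 0` the quotients
are constantly `‖b‖`, so `[0, b] = ‖b‖`.) -/
noncomputable def bracket {X : Type*} [NormedAddCommGroup X] [NormedSpace ℝ X]
    (a b : X) : ℝ :=
  sInf ((fun l : ℝ => (‖a + l • b‖ - ‖a‖) / l) '' Set.Ioi (0 : ℝ))

/-!
The solutions `u` and `v` are both compared with one implicit Euler scheme `p₀, p₁, …` of step `ε`
driven by a Lipschitz `L¹`-approximation `g` of `h`. The doubling of the time variable is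
semi-discrete: `t` is the time of `u` and `x = n ε` that of the scheme. Testing the integral
inequality at `pₙ ∈ A` and bounding the bracket by its difference quotient at `λ = ε` gives, for
`a(n, t) = ‖u(t) - pₙ‖`,
`∂ₜ a(n, t) + (a(n, t) - a(n - 1, t)) / ε ≤ ‖h(t) - g(x)‖ ≤ ‖h(t) - g(t)‖ + C |t - x|`,
a transport inequality along the diagonal `t = x`. An explicit quadratic supersolution of size
`O(√ε)` on the diagonal then bounds `a` there by `‖u(0) - p₀‖ + ∫ ‖h - g‖ + O(√ε)`. Finally `ε → 0`,
`g → h`, and `p₀ → u(0)`, the latter because integral solutions start in the closure of the domain.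
-/

section

open scoped NNReal

variable {X : Type*} [NormedAddCommGroup X] [NormedSpace ℝ X]

lemma abs_norm_add_smul_sub_norm_div_le (a b : X) (l : ℝ) :
    |(‖a + l • b‖ - ‖a‖) / l| ≤ ‖b‖ := by
  rw [abs_div]
  refine div_le_of_le_mul₀ (abs_nonneg l) (norm_nonneg b) ?_
  calc |‖a + l • b‖ - ‖a‖| ≤ ‖a + l • b - a‖ := abs_norm_sub_norm_le _ _
    _ = ‖b‖ * |l| := by rw [add_sub_cancel_left, norm_smul, Real.norm_eq_abs, mul_comm]

lemma bddBelow_norm_add_smul_sub_norm_div (a b : X) :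
    BddBelow ((fun l : ℝ => (‖a + l • b‖ - ‖a‖) / l) '' Set.Ioi (0 : ℝ)) := by
  refine ⟨-‖b‖, ?_⟩
  rintro _ ⟨l, -, rfl⟩
  exact (abs_le.1 (abs_norm_add_smul_sub_norm_div_le a b l)).1

lemma bracket_le_div (a b : X) {l : ℝ} (hl : 0 < l) : bracket a b ≤ (‖a + l • b‖ - ‖a‖) / l :=
  csInf_le (bddBelow_norm_add_smul_sub_norm_div a b) ⟨l, hl, rfl⟩

lemma bracket_le_of_norm_add_smul_le {a b : X} {l c : ℝ} (hl : 0 < l)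
    (h : ‖a + l • b‖ ≤ ‖a‖ + l * c) : bracket a b ≤ c :=
  (bracket_le_div a b hl).trans ((div_le_iff₀' hl).2 (by linarith))

lemma abs_bracket_le (a b : X) : |bracket a b| ≤ ‖b‖ := by
  refine abs_le.2 ⟨le_csInf (Set.nonempty_Ioi.image _) ?_, (bracket_le_div a b one_pos).trans
    (abs_le.1 (abs_norm_add_smul_sub_norm_div_le a b 1)).2⟩
  rintro _ ⟨l, -, rfl⟩
  exact (abs_le.1 (abs_norm_add_smul_sub_norm_div_le a b l)).1

lemma monotoneOn_norm_add_smul_sub_norm_div (a b : X) :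
    MonotoneOn (fun l : ℝ => (‖a + l • b‖ - ‖a‖) / l) (Set.Ioi 0) := by
  intro l hl m hm hlm
  have hconv : ConvexOn ℝ Set.univ fun r : ℝ => ‖AffineMap.lineMap a (a + b) r‖ :=
    convexOn_univ_norm.comp_affineMap (AffineMap.lineMap a (a + b))
  simpa [AffineMap.lineMap_apply_module', add_comm] using
    hconv.secant_mono (Set.mem_univ 0) (Set.mem_univ l) (Set.mem_univ m) hl.ne' hm.ne' hlm

lemma tendsto_norm_add_smul_sub_norm_div (a b : X) :
    Tendsto (fun l : ℝ => (‖a + l • b‖ - ‖a‖) / l) (𝓝[>] 0) (𝓝 (bracket a b)) :=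
  (monotoneOn_norm_add_smul_sub_norm_div a b).tendsto_nhdsGT
    (bddBelow_norm_add_smul_sub_norm_div a b)

lemma integrable_bracket {α : Type*} [MeasurableSpace α] {μ : Measure α} {a b : α → X}
    (ha : AEStronglyMeasurable a μ) (hb : Integrable b μ) :
    Integrable (fun x => bracket (a x) (b x)) μ := by
  refine hb.mono (aestronglyMeasurable_of_tendsto_ae (𝓝[>] (0 : ℝ)) (fun l => ?_)
    (Eventually.of_forall fun x => tendsto_norm_add_smul_sub_norm_div (a x) (b x)))
    (Eventually.of_forall fun x => abs_bracket_le _ _)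
  have hnorm := (ha.add (hb.aestronglyMeasurable.const_smul l)).norm.sub ha.norm
  exact (hnorm.aemeasurable.div_const l).aestronglyMeasurable

lemma intervalIntegrable_of_integrableOn_Icc {E : Type*} [NormedAddCommGroup E] {f : ℝ → E}
    {a b s t : ℝ} (hf : IntegrableOn f (Set.Icc a b)) (hs : s ∈ Set.Icc a b)
    (ht : t ∈ Set.Icc a b) : IntervalIntegrable f volume s t :=
  (hf.mono_set (Set.uIcc_subset_Icc hs ht)).intervalIntegrable

lemma le_of_sub_le_sub_of_lt {φ ψ : ℝ → ℝ} {a b : ℝ} (hφ : ContinuousOn φ (Set.Icc a b))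
    (hψ : ContinuousOn ψ (Set.Icc a b)) (ha : φ a ≤ ψ a)
    (hsub : ∀ s t, a ≤ s → s ≤ t → t ≤ b → (∀ τ ∈ Set.Ioo s t, ψ τ < φ τ) →
      φ t - φ s ≤ ψ t - ψ s) {t : ℝ} (ht : t ∈ Set.Icc a b) : φ t ≤ ψ t := by
  have hsubset : Set.Icc a t ⊆ Set.Icc a b := Set.Icc_subset_Icc_right ht.2
  have hclosed : IsClosed {τ ∈ Set.Icc a t | φ τ ≤ ψ τ} :=
    isClosed_Icc.isClosed_le (hφ.mono hsubset) (hψ.mono hsubset)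
  have hcompact : IsCompact {τ ∈ Set.Icc a t | φ τ ≤ ψ τ} :=
    isCompact_Icc.of_isClosed_subset hclosed fun _ h => h.1
  obtain ⟨s, ⟨hs, hle⟩, hlast⟩ := hcompact.exists_isGreatest ⟨a, ⟨le_rfl, ht.1⟩, ha⟩
  have hincr : φ t - φ s ≤ ψ t - ψ s := hsub s t hs.1 hs.2 ht.2 fun τ hτ => by
    by_contra! hτle
    exact (hlast ⟨⟨hs.1.trans hτ.1.le, hτ.2.le⟩, hτle⟩).not_gt hτ.1
  linarith

lemma integral_norm_sub_le_add_integral_norm_sub {α E : Type*} [MeasurableSpace α]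
    {μ : Measure α} [NormedAddCommGroup E] {f g h : α → E} (hf : Integrable f μ)
    (hg : Integrable g μ) (hh : Integrable h μ) :
    ∫ x, ‖f x - h x‖ ∂μ ≤ (∫ x, ‖f x - g x‖ ∂μ) + ∫ x, ‖g x - h x‖ ∂μ := by
  have hfg : Integrable (fun x => ‖f x - g x‖) μ := (hf.sub hg).norm
  have hgh : Integrable (fun x => ‖g x - h x‖) μ := (hg.sub hh).norm
  rw [← integral_add hfg hgh]
  exact integral_mono (hf.sub hh).norm (hfg.add hgh) fun x =>
    norm_sub_le_norm_sub_add_norm_sub (f x) (g x) (h x)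

lemma exists_lipschitzWith_integral_norm_sub_le {E : Type*} [NormedAddCommGroup E]
    [NormedSpace ℝ E] [FiniteDimensional ℝ E] [MeasurableSpace E] [BorelSpace E] {μ : Measure E}
    [IsFiniteMeasureOnCompacts μ] {f : E → X} (hf : Integrable f μ) {δ : ℝ} (hδ : 0 < δ) :
    ∃ (g : E → X) (K : ℝ≥0) (M : ℝ), LipschitzWith K g ∧ (∀ x, ‖g x‖ ≤ M) ∧ Integrable g μ ∧
      ∫ x, ‖f x - g x‖ ∂μ ≤ δ := by
  obtain ⟨g, hsupp, hsmooth, hfg⟩ :=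
    (memLp_one_iff_integrable.2 hf).exist_eLpNorm_sub_le ENNReal.one_ne_top le_rfl hδ
  obtain ⟨K, hK⟩ := hsmooth.lipschitzWith_of_hasCompactSupport hsupp (by simp)
  obtain ⟨M, hM⟩ := hsupp.exists_bound_of_continuous hsmooth.continuous
  have hg : Integrable g μ := hsmooth.continuous.integrable_of_hasCompactSupport hsupp
  refine ⟨g, K, M, hK, hM, hg, ?_⟩
  calc ∫ x, ‖f x - g x‖ ∂μ = (∫⁻ x, ‖(f - g) x‖ₑ ∂μ).toReal :=
        integral_norm_eq_lintegral_enorm (hf.sub hg).aestronglyMeasurable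
    _ ≤ δ := ENNReal.toReal_le_of_le_ofReal hδ.le (eLpNorm_one_eq_lintegral_enorm.symm.trans_le hfg)

/-- Accretivity of a multivalued operator, given by its graph `A`. -/
def IsAccretive (A : Set (X × X)) : Prop :=
  ∀ p ∈ A, ∀ q ∈ A, ∀ l : ℝ, 0 < l → ‖p.1 - q.1‖ ≤ ‖p.1 - q.1 + l • (p.2 - q.2)‖

/-- The range condition `Range (Id + l A) = X` at the single parameter `l`, for an operator given
by its graph `A`. An accretive `A` is m-accretive when this holds for all `l > 0`. -/
def HasFullRange (A : Set (X × X)) (l : ℝ) : Prop :=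
  ∀ x : X, ∃ p ∈ A, p.1 + l • p.2 = x

/-- Integral solutions in the sense of Bénilan of `u' + A u ∋ h` on `[0, T]`. The initial value is
not prescribed. -/
structure IsIntegralSolution (A : Set (X × X)) (T : ℝ) (h u : ℝ → X) : Prop where
  continuousOn : ContinuousOn u (Set.Icc 0 T)
  sub_le : ∀ p ∈ A, ∀ s t : ℝ, 0 ≤ s → s ≤ t → t ≤ T →
    ‖u t - p.1‖ - ‖u s - p.1‖ ≤ ∫ τ in s..t, bracket (u τ - p.1) (h τ - p.2)

/-- Implicit Euler schemes of step `ε` for `u' + A u ∋ f`. The scheme records points `p k` of the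
graph, so `(p k).1` is the `k`-th iterate and `(p k).2` the element of `A (p k).1` it selects. -/
structure IsEulerScheme (A : Set (X × X)) (ε : ℝ) (f : ℕ → X) (p : ℕ → X × X) : Prop where
  mem : ∀ k, p k ∈ A
  step : ∀ k, (p (k + 1)).1 + ε • (p (k + 1)).2 = (p k).1 + ε • f (k + 1)

variable {A : Set (X × X)} {T : ℝ} {h u : ℝ → X}

namespace IsIntegralSolution

lemma sub_le_integral_of_bracket_le (hu : IsIntegralSolution A T h u)
    (hh : IntegrableOn h (Set.Icc 0 T)) {p : X × X} (hp : p ∈ A) {s t : ℝ} (hs : 0 ≤ s)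
    (hst : s ≤ t) (ht : t ≤ T) {ψ : ℝ → ℝ} (hψ : IntervalIntegrable ψ volume s t)
    (hle : ∀ τ ∈ Set.Ioo s t, bracket (u τ - p.1) (h τ - p.2) ≤ ψ τ) :
    ‖u t - p.1‖ - ‖u s - p.1‖ ≤ ∫ τ in s..t, ψ τ := by
  have hint : IntegrableOn (fun τ => bracket (u τ - p.1) (h τ - p.2)) (Set.Icc 0 T) :=
    integrable_bracket
      ((hu.continuousOn.sub continuousOn_const).aestronglyMeasurable measurableSet_Icc)
      (hh.sub (integrableOn_const (by simp)))
  exact (hu.sub_le p hp s t hs hst ht).trans <| intervalIntegral.integral_mono_on_of_le_Ioo hst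
    (intervalIntegrable_of_integrableOn_Icc hint ⟨hs, hst.trans ht⟩ ⟨hs.trans hst, ht⟩) hψ hle

lemma norm_sub_le_add_integral_norm (hu : IsIntegralSolution A T h u)
    (hh : IntegrableOn h (Set.Icc 0 T)) {p : X × X} (hp : p ∈ A) {t : ℝ}
    (ht : t ∈ Set.Icc 0 T) : ‖u t - p.1‖ ≤ ‖u 0 - p.1‖ + ∫ τ in (0 : ℝ)..t, ‖h τ - p.2‖ := by
  have hint : IntegrableOn (fun τ => ‖h τ - p.2‖) (Set.Icc 0 T) :=
    (hh.sub (integrableOn_const (by simp))).norm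
  exact sub_le_iff_le_add'.1 <| hu.sub_le_integral_of_bracket_le hh hp le_rfl ht.1 ht.2
    (intervalIntegrable_of_integrableOn_Icc hint ⟨le_rfl, ht.1.trans ht.2⟩ ht)
    fun τ _ => (le_abs_self _).trans (abs_bracket_le _ _)

lemma norm_initial_sub_le (hu : IsIntegralSolution A T h u) (hh : IntegrableOn h (Set.Icc 0 T))
    {p : X × X} (hp : p ∈ A) {l : ℝ} (hl : 0 < l) (hpl : p.1 + l • p.2 = u 0) {t δ : ℝ}
    (ht : 0 < t) (htT : t ≤ T) (hδ : ∀ τ ∈ Set.Icc 0 t, ‖u τ - u 0‖ ≤ δ) :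
    ‖u 0 - p.1‖ ≤ 2 * δ + l * ((δ + ∫ τ in (0 : ℝ)..t, ‖h τ‖) / t) := by
  have hfar : ∀ τ ∈ Set.Icc 0 t, ‖u 0 - p.1‖ - δ ≤ ‖u τ - p.1‖ := fun τ hτ => by
    linarith [hδ τ hτ, norm_sub_rev (u τ) (u 0), norm_sub_le_norm_sub_add_norm_sub (u 0) (u τ) p.1]
  have hbracket : ∀ τ ∈ Set.Ioo 0 t,
      bracket (u τ - p.1) (h τ - p.2) ≤ ‖h τ‖ + (2 * δ - ‖u 0 - p.1‖) / l := by
    intro τ hτ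
    have hτ' := Set.Ioo_subset_Icc_self hτ
    refine bracket_le_of_norm_add_smul_le hl ?_
    calc ‖u τ - p.1 + l • (h τ - p.2)‖ = ‖(u τ - u 0) + l • h τ‖ := by
          rw [← hpl]; congr 1; module
      _ ≤ ‖u τ - u 0‖ + l * ‖h τ‖ := norm_add_le_of_le le_rfl (norm_smul_of_nonneg hl.le _).le
      _ ≤ ‖u τ - p.1‖ + (l * ‖h τ‖ + (2 * δ - ‖u 0 - p.1‖)) := by
          linarith [hδ τ hτ', hfar τ hτ']
      _ = ‖u τ - p.1‖ + l * (‖h τ‖ + (2 * δ - ‖u 0 - p.1‖) / l) := by field_simp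
  have hint : IntervalIntegrable (fun τ => ‖h τ‖) volume 0 t :=
    intervalIntegrable_of_integrableOn_Icc hh.norm ⟨le_rfl, ht.le.trans htT⟩ ⟨ht.le, htT⟩
  have hincr := hu.sub_le_integral_of_bracket_le hh hp le_rfl ht.le htT
    (hint.add intervalIntegrable_const) hbracket
  rw [intervalIntegral.integral_add hint intervalIntegrable_const,
    intervalIntegral.integral_const, sub_zero, smul_eq_mul] at hincr
  have hdecay : t * ((‖u 0 - p.1‖ - 2 * δ) / l) ≤ δ + ∫ τ in (0 : ℝ)..t, ‖h τ‖ := by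
    have := hfar t ⟨ht.le, le_rfl⟩
    rw [← neg_sub (2 * δ), neg_div]
    linarith
  rw [← le_div_iff₀' ht, div_le_iff₀' hl] at hdecay
  linarith

lemma initial_mem_closure (hu : IsIntegralSolution A T h u) (hh : IntegrableOn h (Set.Icc 0 T))
    (hT : 0 < T) (hA : ∀ᶠ l in 𝓝[>] (0 : ℝ), HasFullRange A l) :
    u 0 ∈ closure (Prod.fst '' A) := by
  refine Metric.mem_closure_iff.2 fun δ hδ => ?_
  obtain ⟨r, hr, hur⟩ := Metric.continuousWithinAt_iff.1
    (hu.continuousOn 0 ⟨le_rfl, hT.le⟩) (δ / 3) (by positivity)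
  obtain ⟨t, ht, htmin⟩ := exists_between (lt_min hT hr)
  obtain ⟨htT, htr⟩ := lt_min_iff.1 htmin
  have hnear : ∀ τ ∈ Set.Icc 0 t, ‖u τ - u 0‖ ≤ δ / 3 := fun τ hτ => by
    have hτr : dist τ 0 < r := by
      rw [Real.dist_0_eq_abs, abs_of_nonneg hτ.1]
      exact hτ.2.trans_lt htr
    simpa only [dist_eq_norm] using (hur ⟨hτ.1, hτ.2.trans htT.le⟩ hτr).le
  have hlim : Tendsto (fun l => 2 * (δ / 3) + l * ((δ / 3 + ∫ τ in (0 : ℝ)..t, ‖h τ‖) / t))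
      (𝓝[>] 0) (𝓝 (2 * (δ / 3))) :=
    tendsto_nhdsWithin_of_tendsto_nhds <| Continuous.tendsto' (by fun_prop) _ _ (by simp)
  obtain ⟨l, ⟨hrange, hl⟩, hlt⟩ := ((hA.and self_mem_nhdsWithin).and
    (hlim.eventually_lt_const (by linarith : 2 * (δ / 3) < δ))).exists
  obtain ⟨p, hp, hpl⟩ := hrange (u 0)
  refine ⟨p.1, ⟨p, hp, rfl⟩, ?_⟩
  rw [dist_eq_norm]
  exact (hu.norm_initial_sub_le hh hp hl hpl ht htT.le hnear).trans_lt hlt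

lemma norm_sub_le_of_supersolution (hu : IsIntegralSolution A T h u)
    (hh : IntegrableOn h (Set.Icc 0 T)) {ε : ℝ} (hε : 0 < ε) {y f : X} {p : X × X} (hp : p ∈ A)
    (hstep : p.1 + ε • p.2 = y + ε • f) {Φ Ψ ψ : ℝ → ℝ}
    (hΦ : ∀ t ∈ Set.Icc 0 T, ‖u t - y‖ ≤ Φ t) (hΨ0 : ‖u 0 - p.1‖ ≤ Ψ 0)
    (hψ : IntegrableOn ψ (Set.Icc 0 T))
    (hΨ : ∀ t ∈ Set.Icc 0 T, Ψ t = Ψ 0 + ∫ τ in (0 : ℝ)..t, ψ τ)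
    (hsuper : ∀ t ∈ Set.Icc 0 T, (Φ t - Ψ t) / ε + ‖h t - f‖ ≤ ψ t) {t : ℝ}
    (ht : t ∈ Set.Icc 0 T) : ‖u t - p.1‖ ≤ Ψ t := by
  have hT : 0 ≤ T := ht.1.trans ht.2
  have hΨcont : ContinuousOn Ψ (Set.Icc 0 T) := by
    refine ContinuousOn.congr (continuousOn_const.add ?_) hΨ
    rw [← Set.uIcc_of_le hT] at hψ ⊢
    exact intervalIntegral.continuousOn_primitive_interval hψ
  refine le_of_sub_le_sub_of_lt (hu.continuousOn.sub continuousOn_const).norm hΨcont hΨ0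
    (fun s t hs hst htT hlt => ?_) ht
  have hsmem : s ∈ Set.Icc 0 T := ⟨hs, hst.trans htT⟩
  have htmem : t ∈ Set.Icc 0 T := ⟨hs.trans hst, htT⟩
  have hψint {a b : ℝ} := intervalIntegrable_of_integrableOn_Icc hψ (s := a) (t := b)
  have hΨsub : Ψ t - Ψ s = ∫ τ in s..t, ψ τ := by
    rw [hΨ t htmem, hΨ s hsmem, add_sub_add_left_eq_sub, intervalIntegral.integral_interval_sub_left
      (hψint ⟨le_rfl, hT⟩ htmem) (hψint ⟨le_rfl, hT⟩ hsmem)]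
  rw [hΨsub]
  -- Where `Ψ < ‖u - p.1‖`, the difference quotient at `ε` is at most `(Φ - Ψ) / ε + ‖h - f‖`.
  refine hu.sub_le_integral_of_bracket_le hh hp hs hst htT (hψint hsmem htmem) fun τ hτ => ?_
  have hτmem : τ ∈ Set.Icc 0 T := ⟨hs.trans hτ.1.le, hτ.2.le.trans htT⟩
  refine bracket_le_of_norm_add_smul_le hε ?_
  calc ‖u τ - p.1 + ε • (h τ - p.2)‖ = ‖(u τ - y) + ε • (h τ - f)‖ := by
        congr 1
        linear_combination (norm := module) (-1 : ℝ) • hstep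
    _ ≤ Φ τ + ε * ‖h τ - f‖ := norm_add_le_of_le (hΦ τ hτmem) (norm_smul_of_nonneg hε.le _).le
    _ = Ψ τ + ε * ((Φ τ - Ψ τ) / ε + ‖h τ - f‖) := by field_simp; ring
    _ ≤ ‖u τ - p.1‖ + ε * ψ τ := by gcongr; exacts [(hlt τ hτ).le, hsuper τ hτmem]

end IsIntegralSolution

namespace IsEulerScheme

lemma exists_of_hasFullRange {ε : ℝ} (hA : HasFullRange A ε) {p₀ : X × X} (hp₀ : p₀ ∈ A)
    (f : ℕ → X) : ∃ p, IsEulerScheme A ε f p ∧ p 0 = p₀ := by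
  choose J hJA hJ using hA
  let p : ℕ → X × X := fun k => Nat.rec p₀ (fun k q => J (q.1 + ε • f (k + 1))) k
  exact ⟨p, ⟨fun k => k.casesOn hp₀ fun _ => hJA _, fun _ => hJ _⟩, rfl⟩

lemma norm_sub_initial_le {ε C : ℝ} {f : ℕ → X} {p : ℕ → X × X} (hp : IsEulerScheme A ε f p)
    (hA : IsAccretive A) (hε : 0 < ε) (hC : ∀ k, ‖f k - (p 0).2‖ ≤ C) (k : ℕ) :
    ‖(p k).1 - (p 0).1‖ ≤ C * (k * ε) := by
  induction k with
  | zero => simp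
  | succ k ih =>
    calc ‖(p (k + 1)).1 - (p 0).1‖
        ≤ ‖(p (k + 1)).1 - (p 0).1 + ε • ((p (k + 1)).2 - (p 0).2)‖ :=
          hA _ (hp.mem _) _ (hp.mem _) ε hε
      _ = ‖((p k).1 - (p 0).1) + ε • (f (k + 1) - (p 0).2)‖ := by
          congr 1
          linear_combination (norm := module) hp.step k
      _ ≤ C * (k * ε) + ε * C := norm_add_le_of_le ih <| by
          rw [norm_smul_of_nonneg hε.le]
          gcongr
          exact hC _
      _ = C * ((k + 1 : ℕ) * ε) := by push_cast; ring

end IsEulerScheme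

/-- The barrier for the distance between a solution at time `t` and an Euler iterate at time `x`:
for `t ≥ 0` it is a supersolution of `∂ₜ B(x, t) + (B(x, t) - B(x - ε, t)) / ε = |t - x|` that
dominates `|t - x|`. The kink of `|t - x|` is smoothed by `2 |y| √ε ≤ y ^ 2 + ε`. -/
noncomputable def eulerBarrier (ε x t : ℝ) : ℝ :=
  (1 + t) * ((t - x) ^ 2 + ε * (1 + t)) / (2 * √ε)

lemma abs_le_sq_add_div_two_mul_sqrt (y : ℝ) {ε : ℝ} (hε : 0 < ε) :
    |y| ≤ (y ^ 2 + ε) / (2 * √ε) := by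
  rw [le_div_iff₀ (by positivity), ← sq_abs y]
  nlinarith [sq_nonneg (|y| - √ε), Real.sq_sqrt hε.le]

lemma abs_sub_le_add_div_two_mul_sqrt {ε x t : ℝ} (hε : 0 < ε) (ht : 0 ≤ t) :
    |t - x| ≤ ((t - x) ^ 2 + ε * (1 + t)) / (2 * √ε) := by
  refine (abs_le_sq_add_div_two_mul_sqrt (t - x) hε).trans ?_
  gcongr
  nlinarith

lemma abs_sub_le_eulerBarrier {ε x t : ℝ} (hε : 0 < ε) (ht : 0 ≤ t) :
    |t - x| ≤ eulerBarrier ε x t := by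
  rw [eulerBarrier, mul_div_assoc]
  exact (abs_sub_le_add_div_two_mul_sqrt hε ht).trans
    (le_mul_of_one_le_left (by positivity) (by linarith))

lemma eulerBarrier_self {ε : ℝ} (hε : 0 < ε) (t : ℝ) :
    eulerBarrier ε t t = (1 + t) ^ 2 / 2 * √ε := by
  rw [eulerBarrier, sub_self]
  field_simp
  rw [Real.sq_sqrt hε.le]
  ring

lemma contDiff_eulerBarrier (ε x : ℝ) : ContDiff ℝ 1 (eulerBarrier ε x) := by
  unfold eulerBarrier
  fun_prop

lemma hasDerivAt_eulerBarrier {ε : ℝ} (hε : 0 < ε) (x t : ℝ) :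
    HasDerivAt (eulerBarrier ε x)
      ((eulerBarrier ε (x - ε) t - eulerBarrier ε x t) / ε
        + ((t - x) ^ 2 + ε * (1 + t)) / (2 * √ε)) t := by
  have hone : HasDerivAt (fun t : ℝ => 1 + t) 1 t := (hasDerivAt_id' t).const_add 1
  have hsq : HasDerivAt (fun t : ℝ => (t - x) ^ 2) (2 * (t - x)) t := by
    simpa using ((hasDerivAt_id' t).sub_const x).fun_pow 2
  refine ((hone.fun_mul (hsq.fun_add (hone.const_mul ε))).div_const (2 * √ε)).congr_deriv ?_
  simp only [eulerBarrier]
  field_simp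
  ring

lemma add_abs_sub_le_deriv_eulerBarrier {ε x t : ℝ} (hε : 0 < ε) (ht : 0 ≤ t) :
    (eulerBarrier ε (x - ε) t - eulerBarrier ε x t) / ε + |t - x| ≤ deriv (eulerBarrier ε x) t := by
  rw [(hasDerivAt_eulerBarrier hε x t).deriv]
  gcongr
  exact abs_sub_le_add_div_two_mul_sqrt hε ht

variable {k v g : ℝ → X} {C : ℝ≥0} {ε t : ℝ} {p : ℕ → X × X}

namespace IsIntegralSolution

lemma norm_sub_le_add_mul_add_integral (hu : IsIntegralSolution A T h u)
    (hh : IntegrableOn h (Set.Icc 0 T)) (hg : Continuous g) {q : X × X} (hq : q ∈ A) {M : ℝ}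
    (hM : ∀ τ, ‖g τ - q.2‖ ≤ M) (ht : t ∈ Set.Icc 0 T) :
    ‖u t - q.1‖ ≤ ‖u 0 - q.1‖ + M * t + ∫ τ in (0 : ℝ)..t, ‖h τ - g τ‖ := by
  have h0 : (0 : ℝ) ∈ Set.Icc 0 T := ⟨le_rfl, ht.1.trans ht.2⟩
  have herr : IntervalIntegrable (fun τ => ‖h τ - g τ‖) volume 0 t :=
    intervalIntegrable_of_integrableOn_Icc (hh.sub hg.integrableOn_Icc).norm h0 ht
  have hint : IntervalIntegrable (fun τ => ‖h τ - q.2‖) volume 0 t :=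
    intervalIntegrable_of_integrableOn_Icc (hh.sub (integrableOn_const (by simp))).norm h0 ht
  calc ‖u t - q.1‖ ≤ ‖u 0 - q.1‖ + ∫ τ in (0 : ℝ)..t, ‖h τ - q.2‖ :=
        hu.norm_sub_le_add_integral_norm hh hq ht
    _ ≤ ‖u 0 - q.1‖ + ∫ τ in (0 : ℝ)..t, (M + ‖h τ - g τ‖) := by
        gcongr
        refine intervalIntegral.integral_mono_on ht.1 hint (intervalIntegrable_const.add herr)
          fun τ _ => ?_
        linarith [hM τ, norm_sub_le_norm_sub_add_norm_sub (h τ) (g τ) q.2]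
    _ = ‖u 0 - q.1‖ + M * t + ∫ τ in (0 : ℝ)..t, ‖h τ - g τ‖ := by
        rw [intervalIntegral.integral_add intervalIntegrable_const herr,
          intervalIntegral.integral_const, sub_zero, smul_eq_mul, mul_comm t, add_assoc]

lemma norm_sub_le_eulerBarrier_step (hu : IsIntegralSolution A T h u)
    (hh : IntegrableOn h (Set.Icc 0 T)) (hg : LipschitzWith C g) (hε : 0 < ε) {q : X × X}
    (hq : q ∈ A) {x δ : ℝ} {y : X} (hstep : q.1 + ε • q.2 = y + ε • g x)
    (hy : ∀ t ∈ Set.Icc 0 T, ‖u t - y‖ ≤ δ + C * eulerBarrier ε (x - ε) t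
      + ∫ τ in (0 : ℝ)..t, ‖h τ - g τ‖)
    (h0 : ‖u 0 - q.1‖ ≤ δ + C * eulerBarrier ε x 0) (ht : t ∈ Set.Icc 0 T) :
    ‖u t - q.1‖ ≤ δ + C * eulerBarrier ε x t + ∫ τ in (0 : ℝ)..t, ‖h τ - g τ‖ := by
  have herr : IntegrableOn (fun τ => ‖h τ - g τ‖) (Set.Icc 0 T) :=
    (hh.sub hg.continuous.integrableOn_Icc).norm
  have hderiv : Continuous fun τ => C * deriv (eulerBarrier ε x) τ :=
    ((contDiff_eulerBarrier ε x).continuous_deriv le_rfl).const_mul (C : ℝ)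
  refine hu.norm_sub_le_of_supersolution hh hε hq hstep hy
    (Ψ := fun t => δ + C * eulerBarrier ε x t + ∫ τ in (0 : ℝ)..t, ‖h τ - g τ‖)
    (ψ := fun τ => C * deriv (eulerBarrier ε x) τ + ‖h τ - g τ‖)
    (by simpa using h0) (hderiv.integrableOn_Icc.add herr) (fun t ht => ?_) (fun t ht => ?_) ht
  · have herr0 : IntervalIntegrable (fun τ => ‖h τ - g τ‖) volume 0 t :=
      intervalIntegrable_of_integrableOn_Icc herr ⟨le_rfl, ht.1.trans ht.2⟩ ht
    have hftc : ∫ τ in (0 : ℝ)..t, deriv (eulerBarrier ε x) τ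
        = eulerBarrier ε x t - eulerBarrier ε x 0 :=
      intervalIntegral.integral_deriv_of_contDiffOn_Icc
        (contDiff_eulerBarrier ε x).contDiffOn ht.1
    rw [intervalIntegral.integral_add (hderiv.intervalIntegrable 0 t) herr0,
      intervalIntegral.integral_const_mul, hftc, intervalIntegral.integral_same]
    ring
  · have hlip : ‖h t - g x‖ ≤ ‖h t - g t‖ + C * |t - x| :=
      (norm_sub_le_norm_sub_add_norm_sub _ (g t) _).trans (by gcongr; exact hg.norm_sub_le t x)
    have hbarrier := mul_le_mul_of_nonneg_left
      (add_abs_sub_le_deriv_eulerBarrier (x := x) hε ht.1) C.coe_nonneg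
    rw [mul_add, ← mul_div_assoc] at hbarrier
    simp only [add_sub_add_right_eq_sub, add_sub_add_left_eq_sub, ← mul_sub]
    linarith

theorem norm_sub_eulerScheme_le (hu : IsIntegralSolution A T h u)
    (hh : IntegrableOn h (Set.Icc 0 T)) (hA : IsAccretive A) (hg : LipschitzWith C g) (hε : 0 < ε)
    (hp : IsEulerScheme A ε (fun n => g (n * ε)) p) (hC : ∀ τ, ‖g τ - (p 0).2‖ ≤ C) (n : ℕ)
    (ht : t ∈ Set.Icc 0 T) :
    ‖u t - (p n).1‖ ≤ ‖u 0 - (p 0).1‖ + C * eulerBarrier ε (n * ε) t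
      + ∫ τ in (0 : ℝ)..t, ‖h τ - g τ‖ := by
  induction n generalizing t with
  | zero =>
    have hbarrier : t ≤ eulerBarrier ε 0 t := by
      simpa only [sub_zero] using (le_abs_self _).trans (abs_sub_le_eulerBarrier (x := 0) hε ht.1)
    rw [Nat.cast_zero, zero_mul]
    refine (hu.norm_sub_le_add_mul_add_integral hh hg.continuous (hp.mem 0) hC ht).trans ?_
    gcongr
  | succ n ih =>
    have hprev : ((n + 1 : ℕ) : ℝ) * ε - ε = n * ε := by push_cast; ring
    refine hu.norm_sub_le_eulerBarrier_step hh hg hε (hp.mem _) (hp.step n)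
      (fun t ht => by rw [hprev]; exact ih ht) ?_ ht
    have hbarrier : ((n + 1 : ℕ) : ℝ) * ε ≤ eulerBarrier ε ((n + 1 : ℕ) * ε) 0 := by
      simpa using (neg_le_abs _).trans
        (abs_sub_le_eulerBarrier (x := (n + 1 : ℕ) * ε) hε le_rfl)
    calc ‖u 0 - (p (n + 1)).1‖ ≤ ‖u 0 - (p 0).1‖ + ‖(p (n + 1)).1 - (p 0).1‖ := by
          rw [norm_sub_rev (p (n + 1)).1]
          exact norm_sub_le_norm_sub_add_norm_sub _ _ _
      _ ≤ ‖u 0 - (p 0).1‖ + C * ((n + 1 : ℕ) * ε) := by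
          gcongr
          exact hp.norm_sub_initial_le hA hε (fun k => hC _) (n + 1)
      _ ≤ ‖u 0 - (p 0).1‖ + C * eulerBarrier ε ((n + 1 : ℕ) * ε) 0 := by gcongr

lemma norm_sub_le_of_lipschitzWith (hu : IsIntegralSolution A T h u)
    (hv : IsIntegralSolution A T k v) (hh : IntegrableOn h (Set.Icc 0 T))
    (hk : IntegrableOn k (Set.Icc 0 T)) (hA : IsAccretive A)
    (hrange : ∀ᶠ l in 𝓝[>] (0 : ℝ), HasFullRange A l) (hg : LipschitzWith C g) {q : X × X}
    (hq : q ∈ A) (hC : ∀ τ, ‖g τ - q.2‖ ≤ C) (ht0 : 0 < t) (htT : t ≤ T) :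
    ‖u t - v t‖ ≤ (‖u 0 - q.1‖ + ∫ τ in (0 : ℝ)..t, ‖h τ - g τ‖)
      + (‖v 0 - q.1‖ + ∫ τ in (0 : ℝ)..t, ‖k τ - g τ‖) := by
  have hmesh : Tendsto (fun n : ℕ => t / n) atTop (𝓝[>] 0) :=
    tendsto_nhdsWithin_iff.2 ⟨tendsto_const_div_atTop_nhds_zero_nat t,
      (eventually_gt_atTop 0).mono fun n hn => div_pos ht0 (Nat.cast_pos.2 hn)⟩
  have hsqrt : Tendsto (fun n : ℕ => √(t / n)) atTop (𝓝 0) := by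
    simpa using (tendsto_const_div_atTop_nhds_zero_nat t).sqrt
  have hlim (S : ℝ) : Tendsto (fun n : ℕ => S + C * ((1 + t) ^ 2 * √(t / n))) atTop (𝓝 S) := by
    simpa using ((hsqrt.const_mul ((1 + t) ^ 2)).const_mul (C : ℝ)).const_add S
  refine ge_of_tendsto (hlim _) ?_
  filter_upwards [hmesh.eventually hrange, eventually_gt_atTop 0] with n hfull hn
  have hε : 0 < t / n := div_pos ht0 (Nat.cast_pos.2 hn)
  obtain ⟨p, hp, rfl⟩ := IsEulerScheme.exists_of_hasFullRange hfull hq fun j => g (j * (t / n))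
  have hend : (n : ℝ) * (t / n) = t := mul_div_cancel₀ t (Nat.cast_ne_zero.2 hn.ne')
  have hun := hu.norm_sub_eulerScheme_le hh hA hg hε hp hC n ⟨ht0.le, htT⟩
  have hvn := hv.norm_sub_eulerScheme_le hk hA hg hε hp hC n ⟨ht0.le, htT⟩
  rw [hend, eulerBarrier_self hε] at hun hvn
  have htri := norm_sub_le_norm_sub_add_norm_sub (u t) (p n).1 (v t)
  rw [norm_sub_rev (p n).1] at htri
  linarith

end IsIntegralSolution

theorem integral_solutions_contraction_general (hA : IsAccretive A)
    (hrange : ∀ᶠ l in 𝓝[>] (0 : ℝ), HasFullRange A l) (hh : IntegrableOn h (Set.Icc 0 T))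
    (hk : IntegrableOn k (Set.Icc 0 T)) (hu : IsIntegralSolution A T h u)
    (hv : IsIntegralSolution A T k v) (ht : t ∈ Set.Icc 0 T) :
    ‖u t - v t‖ ≤ ‖u 0 - v 0‖ + ∫ τ in (0 : ℝ)..t, ‖h τ - k τ‖ := by
  rcases ht.1.eq_or_lt with rfl | ht0
  · simp
  refine le_of_forall_pos_le_add fun δ hδ => ?_
  obtain ⟨_, ⟨q, hq, rfl⟩, huq⟩ := Metric.mem_closure_iff.1
    (hu.initial_mem_closure hh (ht0.trans_le ht.2) hrange) (δ / 4) (by positivity)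
  rw [dist_eq_norm] at huq
  have hvq : ‖v 0 - q.1‖ ≤ ‖u 0 - v 0‖ + ‖u 0 - q.1‖ := by
    rw [norm_sub_rev (u 0) (v 0)]
    exact norm_sub_le_norm_sub_add_norm_sub _ _ _
  have hsub : Set.Ioc 0 t ⊆ Set.Icc 0 T :=
    Set.Ioc_subset_Icc_self.trans (Set.Icc_subset_Icc_right ht.2)
  have hht : IntegrableOn h (Set.Ioc 0 t) := hh.mono_set hsub
  have hkt : IntegrableOn k (Set.Ioc 0 t) := hk.mono_set hsub
  obtain ⟨g, K, M, hgK, hgM, hg, hhg⟩ :=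
    exists_lipschitzWith_integral_norm_sub_le hht (by positivity : 0 < δ / 4)
  have hkg := integral_norm_sub_le_add_integral_norm_sub hkt hht hg
  simp only [norm_sub_rev (k _) (h _)] at hkg
  have hcmp := hu.norm_sub_le_of_lipschitzWith hv hh hk hA hrange
    (hgK.weaken (le_max_left K (M + ‖q.2‖).toNNReal)) hq
    (fun τ => (norm_sub_le_of_le (hgM τ) le_rfl).trans
      ((Real.le_coe_toNNReal _).trans (NNReal.coe_le_coe.2 (le_max_right _ _)))) ht0 ht.2
  simp only [intervalIntegral.integral_of_le ht.1] at hcmp ⊢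
  linarith

end

/-- Uniqueness / `L¹`-contraction for integral solutions (Bénilan): if `A` is m-accretive on a
Banach space `X`, `h ∈ L¹(0,T;X)`, and `u, v : [0,T] → X` are integral solutions of
`u' + Au ∋ h` with initial data `u₀, v₀`, then `‖u(t) - v(t)‖ ≤ ‖u₀ - v₀‖` on `[0,T]`. -/
theorem integral_solutions_contraction
    {X : Type*} [NormedAddCommGroup X] [NormedSpace ℝ X] [CompleteSpace X]
    (A : Set (X × X))
    (hacc : ∀ p ∈ A, ∀ q ∈ A, ∀ l : ℝ, 0 < l →
      ‖p.1 - q.1‖ ≤ ‖p.1 - q.1 + l • (p.2 - q.2)‖)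
    (hm : ∀ l : ℝ, 0 < l → ∀ g : X, ∃ p ∈ A, p.1 + l • p.2 = g)
    (T : ℝ) (hT : 0 < T) (h : ℝ → X) (hh : IntegrableOn h (Set.Icc 0 T))
    (u v : ℝ → X) (u₀ v₀ : X)
    (hu_cont : ContinuousOn u (Set.Icc 0 T)) (hv_cont : ContinuousOn v (Set.Icc 0 T))
    (hu0 : u 0 = u₀) (hv0 : v 0 = v₀)
    (hu_int : ∀ p ∈ A, ∀ s t : ℝ, 0 ≤ s → s ≤ t → t ≤ T →
      ‖u t - p.1‖ - ‖u s - p.1‖ ≤ ∫ τ in s..t, bracket (u τ - p.1) (h τ - p.2))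
    (hv_int : ∀ p ∈ A, ∀ s t : ℝ, 0 ≤ s → s ≤ t → t ≤ T →
      ‖v t - p.1‖ - ‖v s - p.1‖ ≤ ∫ τ in s..t, bracket (v τ - p.1) (h τ - p.2)) :
    ∀ t ∈ Set.Icc (0 : ℝ) T, ‖u t - v t‖ ≤ ‖u₀ - v₀‖ := by
  intro t ht
  subst hu0 hv0
  simpa using integral_solutions_contraction_general hacc (eventually_nhdsWithin_of_forall hm) hh hh
    ⟨hu_cont, hu_int⟩ ⟨hv_cont, hv_int⟩ ht
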